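/- arXiv:2202.08312 — 3 statements merged into one kernel-verified Lean document; each statement's English description precedes it below -/
import Mathlib

section
/- Let n ≥ 1, let S be an invertible n×n real matrix, and let H be an invertible n×n real matrix. Then there exists an invertible lower-triangular n×n real matrix Ĥ with strictly positive diagonal entries such that ĤᵀĤ = HᵀH, every column of Ĥ has the same ℓ2-norm as the corresponding column of H, and for every matrix W with W·H = S one has L(S·Ĥ⁻¹, Ĥ) ≤ L(W, H), where L(W, H) = (max_i ∑_j H_{ji}²)·‖W‖_F². -/
open Matrix

/-!
Gram–Schmidt applied to the columns of `H` from last to first writes `H = Q * L` with `Q` having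
orthonormal columns and `L` lower-triangular with positive diagonal. Then `Lᴴ * L = Hᴴ * H`, and if
`W * H = S` then `S * L⁻¹ = W * Q`, whose Frobenius norm is at most that of `W` by Bessel's
inequality for the rows of `W`.
-/

section GramSchmidt

open InnerProductSpace

variable {𝕜 E ι : Type*} [RCLike 𝕜] [NormedAddCommGroup E] [InnerProductSpace 𝕜 E]
  [LinearOrder ι] [LocallyFiniteOrderBot ι] [WellFoundedLT ι]

theorem inner_gramSchmidtNormed_eq_zero_of_lt (f : ι → E) {i j : ι} (hij : i < j) :
    inner 𝕜 (gramSchmidtNormed 𝕜 f j) (f i) = 0 := by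
  rw [gramSchmidtNormed, inner_smul_left, gramSchmidt_inv_triangular 𝕜 f hij, mul_zero]

theorem inner_gramSchmidt_self (f : ι → E) (i : ι) :
    inner 𝕜 (gramSchmidt 𝕜 f i) (f i) = (‖gramSchmidt 𝕜 f i‖ : 𝕜) ^ 2 := by
  have h_earlier : ∀ j ∈ Finset.Iio i, inner 𝕜 (gramSchmidt 𝕜 f i)
      ((inner 𝕜 (gramSchmidt 𝕜 f j) (f i) / (‖gramSchmidt 𝕜 f j‖ : 𝕜) ^ 2) •
        gramSchmidt 𝕜 f j) = 0 := fun j hj => by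
    rw [inner_smul_right, gramSchmidt_orthogonal 𝕜 f (Finset.mem_Iio.1 hj).ne', mul_zero]
  conv_lhs => rw [gramSchmidt_def'' 𝕜 f i]
  rw [inner_add_right, inner_sum, Finset.sum_eq_zero h_earlier, add_zero,
    inner_self_eq_norm_sq_to_K]

theorem inner_gramSchmidtNormed_self (f : ι → E) (i : ι) :
    inner 𝕜 (gramSchmidtNormed 𝕜 f i) (f i) = (‖gramSchmidt 𝕜 f i‖ : 𝕜) := by
  rw [gramSchmidtNormed, inner_smul_left, inner_gramSchmidt_self, RCLike.conj_inv,
    RCLike.conj_ofReal, sq, ← mul_assoc, inv_mul_mul_self]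

theorem sum_inner_smul_gramSchmidtNormed [Fintype ι] {f : ι → E} (hf : LinearIndependent 𝕜 f)
    (i : ι) :
    ∑ j, inner 𝕜 (gramSchmidtNormed 𝕜 f j) (f i) • gramSchmidtNormed 𝕜 f j = f i := by
  have h_mem : f i ∈ Submodule.span 𝕜 (Set.range (gramSchmidtNormed 𝕜 f)) := by
    rw [span_gramSchmidtNormed_range, span_gramSchmidt]
    exact Submodule.subset_span (Set.mem_range_self i)
  obtain ⟨c, hc⟩ := (Submodule.mem_span_range_iff_exists_fun 𝕜).1 h_mem
  simp only [← hc, (gramSchmidtNormed_orthonormal hf).inner_right_fintype]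

end GramSchmidt

section Columns

variable {𝕜 l m n : Type*} [RCLike 𝕜] [Fintype m]

theorem gram_toLp_col (A : Matrix m n 𝕜) : gram 𝕜 (fun j => WithLp.toLp 2 (A.col j)) = Aᴴ * A := by
  ext i j
  simp [mul_apply, PiLp.inner_apply, mul_comm]

theorem orthonormal_toLp_col_iff_conjTranspose_mul_self_eq_one [DecidableEq n] {A : Matrix m n 𝕜} :
    Orthonormal 𝕜 (fun j => WithLp.toLp 2 (A.col j)) ↔ Aᴴ * A = 1 := by
  rw [← gram_toLp_col, gram_eq_one_iff_orthonormal]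

theorem ofReal_sum_sq_norm_col (A : Matrix m n 𝕜) (i : n) :
    ((∑ j, ‖A j i‖ ^ 2 : ℝ) : 𝕜) = (Aᴴ * A) i i := by
  simp [mul_apply, RCLike.conj_mul]

theorem sum_sq_norm_col_eq_of_conjTranspose_mul_self_eq [Fintype l] {A : Matrix l n 𝕜}
    {B : Matrix m n 𝕜} (h : Aᴴ * A = Bᴴ * B) (i : n) :
    ∑ j, ‖A j i‖ ^ 2 = ∑ j, ‖B j i‖ ^ 2 := by
  rw [← RCLike.ofReal_inj (K := 𝕜), ofReal_sum_sq_norm_col, ofReal_sum_sq_norm_col, h]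

/-- The loss `L(W, H)` of a factorization `W * H`: the largest squared `ℓ²`-norm of a column of `H`
times the squared Frobenius norm of `W`. If `H` has no columns, the supremum is `0`. -/
noncomputable def factorizationLoss [Fintype l] (W : Matrix l m 𝕜) (H : Matrix m n 𝕜) : ℝ :=
  (⨆ i, ∑ j, ‖H j i‖ ^ 2) * ∑ i, ∑ j, ‖W i j‖ ^ 2

variable [Fintype n] [DecidableEq n] {Q : Matrix m n 𝕜}

theorem sum_sq_norm_vecMul_le (hQ : Qᴴ * Q = 1) (x : m → 𝕜) :
    ∑ j, ‖(x ᵥ* Q) j‖ ^ 2 ≤ ∑ i, ‖x i‖ ^ 2 := by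
  have h_inner (j : n) :
      inner 𝕜 (WithLp.toLp 2 (Q.col j)) (WithLp.toLp 2 (star x)) = star ((x ᵥ* Q) j) := by
    simp [PiLp.inner_apply, vecMul, dotProduct]
  simpa [h_inner, EuclideanSpace.norm_sq_eq] using
    (orthonormal_toLp_col_iff_conjTranspose_mul_self_eq_one.2 hQ).sum_inner_products_le
      (WithLp.toLp 2 (star x)) (s := Finset.univ)

theorem sum_sum_sq_norm_mul_le [Fintype l] (hQ : Qᴴ * Q = 1) (W : Matrix l m 𝕜) :
    ∑ i, ∑ j, ‖(W * Q) i j‖ ^ 2 ≤ ∑ i, ∑ j, ‖W i j‖ ^ 2 :=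
  Finset.sum_le_sum fun i _ => sum_sq_norm_vecMul_le hQ (W i)

end Columns

theorem isUnit_det_of_isLowerTriangular {R n : Type*} [CommRing R] [Fintype n] [LinearOrder n]
    {L : Matrix n n R} (hL : L.IsLowerTriangular) (h_diag : ∀ i, IsUnit (L i i)) :
    IsUnit L.det := by
  rw [det_of_isLowerTriangular L hL]
  exact IsUnit.prod_univ_iff.2 h_diag

section Factorization

open InnerProductSpace
open scoped ComplexOrder

variable {𝕜 l m n : Type*} [RCLike 𝕜] [Fintype m] [Fintype n] [LinearOrder n]

theorem exists_orthonormal_mul_isLowerTriangular {A : Matrix m n 𝕜}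
    (hA : LinearIndependent 𝕜 A.col) :
    ∃ (Q : Matrix m n 𝕜) (L : Matrix n n 𝕜),
      Qᴴ * Q = 1 ∧ L.IsLowerTriangular ∧ (∀ i, 0 < L i i) ∧ Q * L = A := by
  let _ : LocallyFiniteOrderBot nᵒᵈ :=
    .ofIic nᵒᵈ (fun a => Finset.univ.filter (· ≤ a)) (by simp)
  let f : nᵒᵈ → EuclideanSpace 𝕜 m := fun j => WithLp.toLp 2 (A.col (OrderDual.ofDual j))
  have hf : LinearIndependent 𝕜 f :=
    (hA.map' (WithLp.linearEquiv 2 𝕜 (m → 𝕜)).symm.toLinearMap (LinearEquiv.ker _)).comp _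
      OrderDual.ofDual.injective
  let e : n → EuclideanSpace 𝕜 m := fun j => gramSchmidtNormed 𝕜 f (OrderDual.toDual j)
  have he : Orthonormal 𝕜 e :=
    (gramSchmidtNormed_orthonormal hf).comp _ OrderDual.toDual.injective
  refine ⟨of fun k j => e j k, of fun i j => inner 𝕜 (e i) (f (OrderDual.toDual j)),
    orthonormal_toLp_col_iff_conjTranspose_mul_self_eq_one.1 he,
    fun i j hij => inner_gramSchmidtNormed_eq_zero_of_lt f hij, fun i => ?_, ?_⟩
  · rw [of_apply, inner_gramSchmidtNormed_self, RCLike.ofReal_pos, norm_pos_iff]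
    exact gramSchmidt_ne_zero _ hf
  · ext k j
    have h_expand := sum_inner_smul_gramSchmidtNormed hf (OrderDual.toDual j)
    rw [← OrderDual.toDual.sum_comp] at h_expand
    simpa [mul_apply, mul_comm, e, f] using congrArg (fun v => v k) h_expand

theorem square_lower_triangular_factorization_general [Fintype l] {H : Matrix m n 𝕜}
    (hH : LinearIndependent 𝕜 H.col) :
    ∃ L : Matrix n n 𝕜,
      IsUnit L.det ∧
      L.IsLowerTriangular ∧
      (∀ i, 0 < L i i) ∧
      Lᴴ * L = Hᴴ * H ∧
      (∀ i, ∑ j, ‖L j i‖ ^ 2 = ∑ j, ‖H j i‖ ^ 2) ∧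
      ∀ (S : Matrix l n 𝕜) (W : Matrix l m 𝕜), W * H = S →
        factorizationLoss (S * L⁻¹) L ≤ factorizationLoss W H := by
  obtain ⟨Q, L, hQ, hL_tri, hL_diag, rfl⟩ := exists_orthonormal_mul_isLowerTriangular hH
  have hL_det := isUnit_det_of_isLowerTriangular hL_tri fun i => (hL_diag i).ne'.isUnit
  have h_gram : Lᴴ * L = (Q * L)ᴴ * (Q * L) := by
    rw [conjTranspose_mul, Matrix.mul_assoc, ← Matrix.mul_assoc Qᴴ, hQ, Matrix.one_mul]
  have h_col := sum_sq_norm_col_eq_of_conjTranspose_mul_self_eq h_gram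
  refine ⟨L, hL_det, hL_tri, hL_diag, h_gram, h_col, ?_⟩
  rintro _ W rfl
  have h_WQ : W * (Q * L) * L⁻¹ = W * Q := by
    rw [← Matrix.mul_assoc, mul_nonsing_inv_cancel_right _ _ hL_det]
  simp only [factorizationLoss, h_WQ, h_col]
  gcongr ?_ * ?_
  · exact Real.iSup_nonneg fun i => by positivity
  · exact sum_sum_sq_norm_mul_le hQ W

end Factorization

/-- Theorem 2 of the paper (`thm:square_lt_h`): for invertible `S` and any
invertible `H`, there is an invertible lower-triangular `Ĥ` with positive
diagonal such that `ĤᵀĤ = HᵀH`, the column norms of `Ĥ` match those of `H`,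
and for any `W` with `W·H = S`, the factorization `(S·Ĥ⁻¹, Ĥ)` achieves at
most the loss of `(W, H)`, where `L(W,H) = (max_i ‖H_{:,i}‖₂²)·‖W‖_F²`. -/
theorem square_lower_triangular_factorization (n : ℕ) (hn : 1 ≤ n)
    (S H : Matrix (Fin n) (Fin n) ℝ) (hS : IsUnit S.det) (hH : IsUnit H.det) :
    ∃ Hhat : Matrix (Fin n) (Fin n) ℝ,
      IsUnit Hhat.det ∧
      (∀ i j : Fin n, i < j → Hhat i j = 0) ∧
      (∀ i : Fin n, 0 < Hhat i i) ∧
      Hhatᵀ * Hhat = Hᵀ * H ∧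
      (∀ i : Fin n, ∑ j, (Hhat j i) ^ 2 = ∑ j, (H j i) ^ 2) ∧
      (∀ W : Matrix (Fin n) (Fin n) ℝ, W * H = S →
        (⨆ i : Fin n, ∑ j, (Hhat j i) ^ 2) * (∑ i, ∑ j, ((S * Hhat⁻¹) i j) ^ 2) ≤
          (⨆ i : Fin n, ∑ j, (H j i) ^ 2) * (∑ i, ∑ j, (W i j) ^ 2)) := by
  obtain ⟨L, hL_det, hL_tri, hL_diag, hL_gram, hL_col, hL_loss⟩ :=
    square_lower_triangular_factorization_general (l := Fin n)
      (linearIndependent_cols_of_isUnit ((isUnit_iff_isUnit_det H).2 hH))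
  exact ⟨L, hL_det, hL_tri, hL_diag, hL_gram, by simpa using hL_col,
    by simpa [factorizationLoss] using hL_loss S⟩
end

section
/- Let n ≥ 1 and let S be an invertible n×n real matrix. Then there exists exactly one pair (X, λ), where X is an n×n real symmetric positive-definite matrix with X_{ii} = 1 for every i and λ ∈ ℝⁿ, such that SᵀS = X·diag(λ)·X. -/
open Matrix

/-! Solutions are the critical points of `X ↦ tr (A X⁻¹)`, where `A = SᵀS`, on the positive
definite matrices with unit diagonal. A minimizer exists because `det A ≤ det X · tr (A X⁻¹) ^ n`
keeps the sublevel sets away from the singular matrices. At a minimizer `X⁻¹ A X⁻¹` is orthogonal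
to every Hermitian matrix with zero diagonal, hence is diagonal, and its diagonal is `λ`.
Uniqueness is strict monotonicity of the gradient: if `X` and `Y` are solutions and
`Z = X⁻¹ - Y⁻¹`, then `tr (A Z (X + Y) Z) = 0`, which forces `Z = 0`. -/

section Ring

variable {ι R : Type*} [Fintype ι]

theorem trace_mul_conj_eq_trace_conj_mul [CommSemiring R] (A P H : Matrix ι ι R) :
    (A * (P * H * P)).trace = (P * A * P * H).trace := by
  rw [← mul_assoc, trace_mul_comm]
  simp only [mul_assoc]

variable [DecidableEq ι]

theorem trace_diagonal_mul_eq_zero [NonUnitalNonAssocSemiring R] (l : ι → R) {H : Matrix ι ι R}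
    (hH : ∀ i, H i i = 0) : (diagonal l * H).trace = 0 := by
  simp [trace, diagonal_mul, hH]

theorem eq_mul_mul_iff_inv_mul_mul_inv_eq [CommRing R] {A D X : Matrix ι ι R} (hX : IsUnit X) :
    A = X * D * X ↔ X⁻¹ * A * X⁻¹ = D := by
  have hXdet : IsUnit X.det := (isUnit_iff_isUnit_det X).mp hX
  constructor <;> rintro rfl <;>
    simp only [mul_assoc, mul_nonsing_inv _ hXdet, nonsing_inv_mul _ hXdet, mul_one,
      mul_nonsing_inv_cancel_left _ _ hXdet, nonsing_inv_mul_cancel_left _ _ hXdet]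

theorem inv_sub_inv_mul_add_mul_inv_sub_inv [CommRing R] {X Y : Matrix ι ι R}
    (hX : IsUnit X) (hY : IsUnit Y) :
    (X⁻¹ - Y⁻¹) * (X + Y) * (X⁻¹ - Y⁻¹) = X⁻¹ * (Y - X) * X⁻¹ - Y⁻¹ * (Y - X) * Y⁻¹ := by
  have hXdet : IsUnit X.det := (isUnit_iff_isUnit_det X).mp hX
  have hYdet : IsUnit Y.det := (isUnit_iff_isUnit_det Y).mp hY
  simp only [sub_mul, mul_sub, mul_add, add_mul, mul_assoc, mul_nonsing_inv _ hXdet,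
    mul_nonsing_inv _ hYdet, nonsing_inv_mul_cancel_left _ _ hXdet,
    nonsing_inv_mul_cancel_left _ _ hYdet, mul_one]
  abel

end Ring

section RCLike

open scoped ComplexOrder MatrixOrder

variable {ι 𝕜 : Type*} [RCLike 𝕜]

theorem sq_norm_apply_le_of_posSemidef {M : Matrix ι ι 𝕜} (hM : M.PosSemidef) (i j : ι) :
    ((‖M i j‖ ^ 2 : ℝ) : 𝕜) ≤ M i i * M j j := by
  have hminor := (hM.submatrix ![i, j]).det_nonneg
  rw [det_fin_two] at hminor
  simp only [submatrix_apply, cons_val_zero, cons_val_one] at hminor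
  rw [← hM.isHermitian.apply j i, RCLike.star_def, RCLike.mul_conj] at hminor
  exact_mod_cast sub_nonneg.mp hminor

theorem isClosed_setOf_matrix_posSemidef : IsClosed {X : Matrix ι ι 𝕜 | X.PosSemidef} := by
  simp only [PosSemidef, IsHermitian, Finsupp.sum, Set.ofPred_and, Set.ofPred_forall]
  refine (isClosed_eq (by fun_prop) (by fun_prop)).inter (isClosed_iInter fun v => ?_)
  exact isClosed_le (by fun_prop) (by fun_prop)

theorem isCompact_setOf_posSemidef_diag_eq_one :
    IsCompact {X : Matrix ι ι 𝕜 | X.PosSemidef ∧ ∀ i, X i i = 1} := by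
  have hbox : IsCompact
      (Set.univ.pi fun _ : ι => Set.univ.pi fun _ : ι => Metric.closedBall (0 : 𝕜) 1) :=
    isCompact_univ_pi fun _ => isCompact_univ_pi fun _ => isCompact_closedBall 0 1
  refine IsCompact.of_isClosed_subset (X := Matrix ι ι 𝕜) hbox ?_ ?_
  · simp only [Set.ofPred_and, Set.ofPred_forall]
    exact isClosed_setOf_matrix_posSemidef.inter
      (isClosed_iInter fun i => isClosed_eq (by fun_prop) continuous_const)
  · rintro X ⟨hX, hdiag⟩ i - j -
    have hsq : ‖X i j‖ ^ 2 ≤ 1 := by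
      have h := sq_norm_apply_le_of_posSemidef hX i j
      rw [hdiag, hdiag, mul_one] at h
      exact_mod_cast h
    simpa using (sq_le_one_iff₀ (norm_nonneg _)).mp hsq

theorem eventually_posDef_of_isHermitian [Finite ι] {X : Matrix ι ι 𝕜} (hX : X.PosDef) :
    ∀ᶠ Y in nhds X, Y.IsHermitian → Y.PosDef := by
  cases nonempty_fintype ι
  have hsphere : ∀ᶠ Y in nhds X, ∀ v ∈ Metric.sphere (0 : ι → 𝕜) 1,
      0 < RCLike.re (star v ⬝ᵥ (Y *ᵥ v)) := by
    refine (isCompact_sphere (0 : ι → 𝕜) 1).eventually_forall_of_forall_eventually fun v hv => ?_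
    have hcont : Continuous fun p : Matrix ι ι 𝕜 × (ι → 𝕜) =>
        RCLike.re (star p.2 ⬝ᵥ (p.1 *ᵥ p.2)) := by fun_prop
    exact hcont.continuousAt.eventually_const_lt
      (hX.re_dotProduct_pos (ne_zero_of_mem_unit_sphere ⟨v, hv⟩))
  filter_upwards [hsphere] with Y hY hYherm
  refine .of_dotProduct_mulVec_pos hYherm fun {v} hv => ?_
  have hnorm : 0 < ‖v‖ := norm_pos_iff.mpr hv
  have hunit := hY (((‖v‖⁻¹ : ℝ) : 𝕜) • v) (by simp [norm_smul, hnorm.ne'])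
  rw [mulVec_smul, star_smul, smul_dotProduct, dotProduct_smul, smul_smul, smul_eq_mul,
    RCLike.star_def, RCLike.conj_ofReal, ← RCLike.ofReal_mul, RCLike.re_ofReal_mul] at hunit
  exact RCLike.pos_iff.mpr ⟨pos_of_mul_pos_right hunit (by positivity),
    hYherm.im_star_dotProduct_mulVec_self v⟩

variable (ι 𝕜) in
/-- The nonsingular correlation matrices: positive definite with unit diagonal. -/
def posDefCorrelation : Set (Matrix ι ι 𝕜) :=
  {X | X.PosDef ∧ ∀ i, X i i = 1}

theorem eventually_add_smul_mem_posDefCorrelation [Finite ι]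
    {X H : Matrix ι ι 𝕜} (hX : X ∈ posDefCorrelation ι 𝕜) (hH : H.IsHermitian)
    (hHdiag : ∀ i, H i i = 0) :
    ∀ᶠ t : ℝ in nhds 0, X + t • H ∈ posDefCorrelation ι 𝕜 := by
  have hline : ContinuousAt (fun t : ℝ => X + t • H) 0 := by fun_prop
  have hnear : ∀ᶠ t : ℝ in nhds 0, (X + t • H).IsHermitian → (X + t • H).PosDef :=
    hline.eventually (by simpa using eventually_posDef_of_isHermitian hX.1)
  filter_upwards [hnear] with t ht
  exact ⟨ht (hX.1.isHermitian.add (hH.smul (.all t))), fun i => by simp [hX.2 i, hHdiag i]⟩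

variable [Fintype ι]

theorem exists_isUnit_conjTranspose_mul_self [DecidableEq ι] {A : Matrix ι ι 𝕜} (hA : A.PosDef) :
    ∃ S : Matrix ι ι 𝕜, IsUnit S ∧ A = Sᴴ * S :=
  CStarAlgebra.isStrictlyPositive_iff_eq_star_mul_self.mp hA.isStrictlyPositive

theorem eq_zero_of_trace_mul_conjTranspose_mul_mul_eq_zero {A B Z : Matrix ι ι 𝕜}
    (hA : A.PosDef) (hB : B.PosDef) (h : (A * (Zᴴ * B * Z)).trace = 0) : Z = 0 := by
  classical
  obtain ⟨S, hS, rfl⟩ := exists_isUnit_conjTranspose_mul_self hA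
  obtain ⟨T, hT, rfl⟩ := exists_isUnit_conjTranspose_mul_self hB
  have hgram : ((T * Z * Sᴴ)ᴴ * (T * Z * Sᴴ)).trace = 0 := by
    rw [← h, mul_assoc Sᴴ, trace_mul_comm Sᴴ]
    simp only [conjTranspose_mul, conjTranspose_conjTranspose, mul_assoc]
  rw [trace_conjTranspose_mul_self_eq_zero_iff] at hgram
  have hSH : IsUnit Sᴴ := hS.star
  rwa [hSH.mul_left_eq_zero, hT.mul_right_eq_zero] at hgram

theorem isDiag_of_forall_re_trace_mul_eq_zero {D : Matrix ι ι 𝕜} (hD : D.IsHermitian)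
    (horth : ∀ H : Matrix ι ι 𝕜, H.IsHermitian → (∀ i, H i i = 0) →
      RCLike.re (D * H).trace = 0) : D.IsDiag := by
  classical
  set H := D - diagonal D.diag with hH
  have hHdiag : ∀ i, H i i = 0 := fun i => by simp [hH]
  have hHherm : H.IsHermitian := hD.sub (isHermitian_diagonal_iff.mpr fun i => hD.apply i i)
  have htrace : (D * H).trace = (Hᴴ * H).trace := by
    rw [hHherm.eq, ← sub_add_cancel D (diagonal D.diag), ← hH, add_mul, trace_add,
      trace_diagonal_mul_eq_zero _ hHdiag, add_zero]
  have hnonneg : 0 ≤ (Hᴴ * H).trace := (posSemidef_conjTranspose_mul_self H).trace_nonneg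
  have hzero : (Hᴴ * H).trace = 0 :=
    RCLike.ext (by simpa [htrace] using horth H hHherm hHdiag)
      (by simpa using (RCLike.nonneg_iff.mp hnonneg).2)
  exact (isDiag_iff_diagonal_diag D).mpr
    (sub_eq_zero.mp (trace_conjTranspose_mul_self_eq_zero_iff.mp hzero)).symm

theorem exists_posSemidef_trace_det_eq_mul [DecidableEq ι] {A B : Matrix ι ι 𝕜} (hA : A.PosSemidef)
    (hB : B.PosSemidef) :
    ∃ M : Matrix ι ι 𝕜, M.PosSemidef ∧ M.trace = (A * B).trace ∧ M.det = (A * B).det := by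
  obtain ⟨S, rfl⟩ := CStarAlgebra.nonneg_iff_eq_star_mul_self.mp hA.nonneg
  refine ⟨S * B * Sᴴ, hB.mul_mul_conjTranspose_same S, ?_, ?_⟩
  · rw [trace_mul_comm, ← mul_assoc, star_eq_conjTranspose]
  · simp only [star_eq_conjTranspose, det_mul]
    ring

theorem trace_mul_nonneg_of_posSemidef {A B : Matrix ι ι 𝕜} (hA : A.PosSemidef)
    (hB : B.PosSemidef) : 0 ≤ (A * B).trace := by
  classical
  obtain ⟨M, hM, htrace, -⟩ := exists_posSemidef_trace_det_eq_mul hA hB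
  exact htrace ▸ hM.trace_nonneg

variable [DecidableEq ι]

theorem det_le_trace_pow_card_of_posSemidef {M : Matrix ι ι 𝕜} (hM : M.PosSemidef) :
    M.det ≤ M.trace ^ Fintype.card ι := by
  have hle : ∏ i, hM.1.eigenvalues i ≤ (∑ i, hM.1.eigenvalues i) ^ Fintype.card ι := by
    rw [← Finset.card_univ, ← Finset.prod_const]
    exact Finset.prod_le_prod (fun i _ => hM.eigenvalues_nonneg i) fun i hi =>
      Finset.single_le_sum (fun j _ => hM.eigenvalues_nonneg j) hi
  rw [hM.1.det_eq_prod_eigenvalues, hM.1.trace_eq_sum_eigenvalues]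
  exact_mod_cast hle

theorem det_mul_le_trace_mul_pow_card {A B : Matrix ι ι 𝕜} (hA : A.PosSemidef)
    (hB : B.PosSemidef) : (A * B).det ≤ (A * B).trace ^ Fintype.card ι := by
  obtain ⟨M, hM, htrace, hdet⟩ := exists_posSemidef_trace_det_eq_mul hA hB
  exact htrace ▸ hdet ▸ det_le_trace_pow_card_of_posSemidef hM

theorem isCompact_setOf_posDefCorrelation_le_re_det {c : ℝ} (hc : 0 < c) :
    IsCompact {X ∈ posDefCorrelation ι 𝕜 | c ≤ RCLike.re X.det} := by
  convert (isCompact_setOf_posSemidef_diag_eq_one (ι := ι) (𝕜 := 𝕜)).inter_right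
    (isClosed_le (continuous_const (y := c)) (g := fun X => RCLike.re X.det) (by fun_prop)) using 1
  ext X
  refine ⟨fun ⟨⟨hX, hdiag⟩, hdet⟩ => ⟨⟨hX.posSemidef, hdiag⟩, hdet⟩,
    fun ⟨⟨hX, hdiag⟩, hdet⟩ => ⟨⟨hX.posDef_iff_det_ne_zero.mpr fun h => ?_, hdiag⟩, hdet⟩⟩
  have hcdet : c ≤ RCLike.re X.det := hdet
  rw [h, map_zero] at hcdet
  exact hc.not_ge hcdet

/-- The objective `tr (A X⁻¹)`, minimized over `X`. The trace is real when `A` and `X` are positive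
definite; taking its real part only makes the values real numbers. -/
noncomputable def inverseTrace (A X : Matrix ι ι 𝕜) : ℝ :=
  RCLike.re (A * X⁻¹).trace

theorem ofReal_inverseTrace {A X : Matrix ι ι 𝕜} (hA : A.PosSemidef) (hX : X.PosSemidef) :
    (inverseTrace A X : 𝕜) = (A * X⁻¹).trace :=
  RCLike.conj_eq_iff_re.mp (RCLike.conj_eq_iff_im.mpr
    (RCLike.nonneg_iff.mp (trace_mul_nonneg_of_posSemidef hA hX.inv)).2)

theorem inverseTrace_nonneg {A X : Matrix ι ι 𝕜} (hA : A.PosSemidef) (hX : X.PosSemidef) :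
    0 ≤ inverseTrace A X :=
  (RCLike.nonneg_iff.mp (trace_mul_nonneg_of_posSemidef hA hX.inv)).1

theorem re_det_le_re_det_mul_inverseTrace_pow {A X : Matrix ι ι 𝕜} (hA : A.PosSemidef)
    (hX : X.PosDef) :
    RCLike.re A.det ≤ RCLike.re X.det * inverseTrace A X ^ Fintype.card ι := by
  have hdet : A.det ≤ X.det * (inverseTrace A X : 𝕜) ^ Fintype.card ι := by
    calc A.det = X.det * (A * X⁻¹).det := by
          rw [← det_mul, ← det_mul_comm, mul_assoc, nonsing_inv_mul _ hX.det_pos.ne'.isUnit,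
            mul_one]
      _ ≤ X.det * (inverseTrace A X : 𝕜) ^ Fintype.card ι := by
          rw [ofReal_inverseTrace hA hX.posSemidef]
          exact mul_le_mul_of_nonneg_left
            (det_mul_le_trace_mul_pow_card hA hX.inv.posSemidef) hX.det_pos.le
  have hre := (RCLike.le_iff_re_im.mp hdet).1
  rwa [← RCLike.ofReal_pow, RCLike.re_mul_ofReal] at hre

section Derivative

open scoped Matrix.Norms.Operator

theorem hasFDerivAt_matrix_inv {X : Matrix ι ι 𝕜} (hX : IsUnit X) :
    HasFDerivAt (Inv.inv : Matrix ι ι 𝕜 → Matrix ι ι 𝕜)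
      (-ContinuousLinearMap.mulLeftRight ℝ (Matrix ι ι 𝕜) X⁻¹ X⁻¹) X := by
  obtain ⟨u, rfl⟩ := hX
  have hinv : (Inv.inv : Matrix ι ι 𝕜 → Matrix ι ι 𝕜) = Ring.inverse :=
    funext nonsing_inv_eq_ringInverse
  rw [hinv, Ring.inverse_unit]
  exact hasFDerivAt_ringInverse u

theorem hasDerivAt_inverseTrace_add_smul (A H : Matrix ι ι 𝕜) {X : Matrix ι ι 𝕜}
    (hX : IsUnit X) :
    HasDerivAt (fun t : ℝ => inverseTrace A (X + t • H))
      (-RCLike.re (X⁻¹ * A * X⁻¹ * H).trace) 0 := by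
  have hline : HasDerivAt (fun t : ℝ => X + t • H) H 0 := by
    have h := ((hasDerivAt_id (0 : ℝ)).smul_const H).const_add X
    rwa [one_smul] at h
  have hinv : HasDerivAt (fun t : ℝ => (X + t • H)⁻¹) (-(X⁻¹ * H * X⁻¹)) 0 :=
    (hasFDerivAt_matrix_inv hX).comp_hasDerivAt_of_eq 0 hline (by simp)
  let L : Matrix ι ι 𝕜 →ₗ[ℝ] ℝ :=
    RCLike.reLm ∘ₗ traceLinearMap ι ℝ 𝕜 ∘ₗ LinearMap.mulLeft ℝ A
  have hL : L (-(X⁻¹ * H * X⁻¹)) = -RCLike.re (X⁻¹ * A * X⁻¹ * H).trace := by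
    simp [L, trace_mul_conj_eq_trace_conj_mul A X⁻¹ H]
  rw [← hL]
  exact L.toContinuousLinearMap.hasFDerivAt.comp_hasDerivAt 0 hinv

end Derivative

theorem continuousAt_inverseTrace (A : Matrix ι ι 𝕜) {X : Matrix ι ι 𝕜} (hX : IsUnit X) :
    ContinuousAt (inverseTrace A) X := by
  have htrace : Continuous fun Z : Matrix ι ι 𝕜 => RCLike.re (A * Z).trace := by fun_prop
  exact htrace.continuousAt.comp (hasFDerivAt_matrix_inv hX).continuousAt

theorem exists_isMinOn_inverseTrace {A : Matrix ι ι 𝕜} (hA : A.PosDef) :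
    ∃ X ∈ posDefCorrelation ι 𝕜, IsMinOn (inverseTrace A) (posDefCorrelation ι 𝕜) X := by
  have hone : (1 : Matrix ι ι 𝕜) ∈ posDefCorrelation ι 𝕜 := ⟨.one, fun _ => one_apply_eq _⟩
  set T := inverseTrace A 1 ^ Fintype.card ι
  have hAdet : 0 < RCLike.re A.det := (RCLike.pos_iff.mp hA.det_pos).1
  have hT : 0 < T := by
    have h := re_det_le_re_det_mul_inverseTrace_pow hA.posSemidef hone.1
    rw [det_one, RCLike.one_re, one_mul] at h
    exact hAdet.trans_le h
  set K := {X ∈ posDefCorrelation ι 𝕜 | RCLike.re A.det / T ≤ RCLike.re X.det}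
  have hK : IsCompact K := isCompact_setOf_posDefCorrelation_le_re_det (div_pos hAdet hT)
  have hsublevel : ∀ Y ∈ posDefCorrelation ι 𝕜, inverseTrace A Y ≤ inverseTrace A 1 → Y ∈ K :=
    fun Y hY hle => ⟨hY, (div_le_iff₀ hT).mpr <|
      (re_det_le_re_det_mul_inverseTrace_pow hA.posSemidef hY.1).trans <|
      mul_le_mul_of_nonneg_left
        (pow_le_pow_left₀ (inverseTrace_nonneg hA.posSemidef hY.1.posSemidef) hle _)
        (RCLike.pos_iff.mp hY.1.det_pos).1.le⟩
  have hcont : ContinuousOn (inverseTrace A) K := fun X hX =>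
    (continuousAt_inverseTrace A hX.1.1.isUnit).continuousWithinAt
  obtain ⟨X, hX, hmin⟩ := hK.exists_isMinOn ⟨1, hsublevel 1 hone le_rfl⟩ hcont
  refine ⟨X, hX.1, fun Y hY => ?_⟩
  rcases le_total (inverseTrace A Y) (inverseTrace A 1) with hle | hle
  · exact hmin (hsublevel Y hY hle)
  · exact (hmin (hsublevel 1 hone le_rfl)).trans hle

theorem isDiag_of_isMinOn_inverseTrace {A X : Matrix ι ι 𝕜} (hA : A.IsHermitian)
    (hX : X ∈ posDefCorrelation ι 𝕜)
    (hmin : IsMinOn (inverseTrace A) (posDefCorrelation ι 𝕜) X) : (X⁻¹ * A * X⁻¹).IsDiag := by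
  have hherm : (X⁻¹ * A * X⁻¹).IsHermitian := by
    have h := isHermitian_mul_mul_conjTranspose X⁻¹ hA
    rwa [hX.1.inv.isHermitian.eq] at h
  refine isDiag_of_forall_re_trace_mul_eq_zero hherm fun H hH hHdiag => ?_
  have hlocal : IsLocalMin (fun t : ℝ => inverseTrace A (X + t • H)) 0 := by
    filter_upwards [eventually_add_smul_mem_posDefCorrelation hX hH hHdiag] with t ht
    simpa using hmin ht
  exact neg_eq_zero.mp
    (hlocal.hasDerivAt_eq_zero (hasDerivAt_inverseTrace_add_smul A H hX.1.isUnit))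

theorem eq_of_inv_mul_mul_inv_eq_diagonal {A X Y : Matrix ι ι 𝕜} {l m : ι → 𝕜} (hA : A.PosDef)
    (hX : X ∈ posDefCorrelation ι 𝕜) (hY : Y ∈ posDefCorrelation ι 𝕜)
    (hXA : X⁻¹ * A * X⁻¹ = diagonal l) (hYA : Y⁻¹ * A * Y⁻¹ = diagonal m) : X = Y := by
  set Z := X⁻¹ - Y⁻¹
  have hZherm : Zᴴ = Z := hX.1.inv.isHermitian.sub hY.1.inv.isHermitian
  have hsplit : Z * (X + Y) * Z = X⁻¹ * (Y - X) * X⁻¹ - Y⁻¹ * (Y - X) * Y⁻¹ :=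
    inv_sub_inv_mul_add_mul_inv_sub_inv hX.1.isUnit hY.1.isUnit
  have hgradient : ∀ {W : Matrix ι ι 𝕜} {k : ι → 𝕜}, W⁻¹ * A * W⁻¹ = diagonal k →
      (A * (W⁻¹ * (Y - X) * W⁻¹)).trace = 0 := fun {W k} hWA => by
    rw [trace_mul_conj_eq_trace_conj_mul, hWA]
    exact trace_diagonal_mul_eq_zero _ fun i => by simp [hX.2 i, hY.2 i]
  have hZ0 : Z = 0 := by
    refine eq_zero_of_trace_mul_conjTranspose_mul_mul_eq_zero hA (hX.1.add hY.1) ?_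
    rw [hZherm, hsplit, mul_sub, trace_sub, hgradient hXA, hgradient hYA, sub_zero]
  exact inv_inj (sub_eq_zero.mp hZ0) ((isUnit_iff_isUnit_det X).mp hX.1.isUnit)

theorem lagrangian_equation_unique_solution_general {A : Matrix ι ι 𝕜} (hA : A.PosDef) :
    ∃! p : Matrix ι ι 𝕜 × (ι → 𝕜),
      (p.1.PosDef ∧ ∀ i, p.1 i i = 1) ∧ A = p.1 * diagonal p.2 * p.1 := by
  obtain ⟨X, hX, hmin⟩ := exists_isMinOn_inverseTrace hA
  have hdiag := (isDiag_of_isMinOn_inverseTrace hA.isHermitian hX hmin).diagonal_diag.symm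
  refine ⟨(X, (X⁻¹ * A * X⁻¹).diag),
    ⟨hX, (eq_mul_mul_iff_inv_mul_mul_inv_eq hX.1.isUnit).mpr hdiag⟩, ?_⟩
  rintro ⟨Y, m⟩ ⟨hY, hYA⟩
  replace hYA : Y⁻¹ * A * Y⁻¹ = diagonal m := (eq_mul_mul_iff_inv_mul_mul_inv_eq hY.1.isUnit).mp hYA
  obtain rfl : Y = X := eq_of_inv_mul_mul_inv_eq_diagonal hA hY hX hYA hdiag
  exact Prod.ext rfl (diagonal_injective (hYA.symm.trans hdiag))

end RCLike

/-- Corollary `uniqueness_lagrangian_zero_def`: for invertible `S` there is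
exactly one pair `(X, λ)` with `X` symmetric positive definite with unit
diagonal and `λ ∈ ℝⁿ` such that `SᵀS = X·diag(λ)·X`. -/
theorem lagrangian_equation_unique_solution (n : ℕ) (hn : 1 ≤ n)
    (S : Matrix (Fin n) (Fin n) ℝ) (hS : IsUnit S.det) :
    ∃! p : Matrix (Fin n) (Fin n) ℝ × (Fin n → ℝ),
      (p.1.PosDef ∧ ∀ i : Fin n, p.1 i i = 1) ∧
      Sᵀ * S = p.1 * Matrix.diagonal p.2 * p.1 := by
  have hPosDef : (Sᵀ * S).PosDef := by
    simpa using PosDef.conjTranspose_mul_self S (mulVec_injective_of_isUnit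
      ((isUnit_iff_isUnit_det S).mpr hS))
  exact lagrangian_equation_unique_solution_general hPosDef
end

section
/- Let n ≥ 1 and let S be the n×n prefix-sum matrix with entries S_{ij} = 1 if j ≤ i and 0 otherwise. Then for all n×n real matrices A and B with A·B = S, the loss L(A,B) = (max_i ∑_j B_{ji}²)·(∑_{i,j} A_{ij}²) satisfies L(A,B) ≥ n·(log n)² / (4π²), where log is the natural logarithm. In particular, any matrix-factorization-based DP mechanism for prefix sums has root-mean expected squared error at least of order (log n)·√n. -/
open Matrix Real

/-! Write `a i` for the rows of `A` and `b j` for the columns of `B`, so that `A * B = S` says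
`⟪a i, b j⟫ = 1` for `j ≤ i` and `0` otherwise. Pair this array with the kernel `1 / (i - j)`.
On one side the pairing is a sum of harmonic numbers, of size `n log n`; on the other side
Hilbert's inequality, with its constant `π`, bounds it by `π (∑ ‖a i‖²)^(1/2) (∑ ‖b j‖²)^(1/2)`.

Hilbert's inequality in turn holds because the `2π / d` are the sine coefficients of the sawtooth
`π - t` on `[0, 2π]`, which is bounded by `π`: the pairing becomes the integral of the sawtooth
against a product of two trigonometric polynomials, whose square means are given by Parseval. -/

open scoped InnerProductSpace

section FourierIntegrals

lemma sin_int_mul_two_pi (d : ℤ) : sin (d * (2 * π)) = 0 := by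
  simpa using sin_periodic.int_mul_eq d

lemma integral_cos_int_mul {d : ℤ} (hd : d ≠ 0) : ∫ t in (0 : ℝ)..2 * π, cos (d * t) = 0 := by
  rw [intervalIntegral.integral_comp_mul_left cos (Int.cast_ne_zero.mpr hd), integral_cos]
  simp [sin_int_mul_two_pi]

-- At `d = 0` both sides vanish, the right one because `x / 0 = 0`.
lemma integral_pi_sub_mul_sin_int_mul (d : ℤ) :
    ∫ t in (0 : ℝ)..2 * π, (π - t) * sin (d * t) = 2 * π / d := by
  rcases eq_or_ne d 0 with rfl | hd
  · simp
  have hd' : (d : ℝ) ≠ 0 := Int.cast_ne_zero.mpr hd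
  have hasDerivAt_pi_sub (t : ℝ) : HasDerivAt (fun t ↦ π - t) (-1) t :=
    (hasDerivAt_id' t).const_sub π
  have hasDerivAt_neg_cos_div (t : ℝ) : HasDerivAt (fun t ↦ -cos (d * t) / d) (sin (d * t)) t := by
    refine (((hasDerivAt_id' t).const_mul (d : ℝ)).cos.fun_neg.div_const (d : ℝ)).congr_deriv ?_
    field_simp
  rw [intervalIntegral.integral_mul_deriv_eq_deriv_mul (fun t _ ↦ hasDerivAt_pi_sub t)
    (fun t _ ↦ hasDerivAt_neg_cos_div t) (Continuous.intervalIntegrable (by fun_prop) _ _)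
    (Continuous.intervalIntegrable (by fun_prop) _ _), intervalIntegral.integral_const_mul,
    intervalIntegral.integral_div, intervalIntegral.integral_neg, integral_cos_int_mul hd,
    cos_int_mul_two_pi]
  simp only [mul_zero, cos_zero]
  ring

lemma integral_sum_sum_mul {ι κ : Type*} [Fintype ι] [Fintype κ] (c : ι → κ → ℝ)
    {f : ι → κ → ℝ → ℝ} {a b : ℝ}
    (hf : ∀ i j, IntervalIntegrable (f i j) MeasureTheory.volume a b) :
    ∫ t in a..b, ∑ i, ∑ j, c i j * f i j t = ∑ i, ∑ j, c i j * ∫ t in a..b, f i j t := by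
  have term_integrable (i : ι) (j : κ) :
      IntervalIntegrable (fun t ↦ c i j * f i j t) MeasureTheory.volume a b :=
    (hf i j).const_mul _
  have row_integrable (i : ι) :
      IntervalIntegrable (fun t ↦ ∑ j, c i j * f i j t) MeasureTheory.volume a b := by
    simpa only [Finset.sum_fn] using
      IntervalIntegrable.sum Finset.univ fun j _ ↦ term_integrable i j
  simp only [intervalIntegral.integral_finsetSum fun i _ ↦ row_integrable i,
    intervalIntegral.integral_finsetSum fun j _ ↦ term_integrable _ j,
    intervalIntegral.integral_const_mul]

end FourierIntegrals

section TrigPolynomial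

variable {E ι κ : Type*} [Fintype ι] [Fintype κ]

section Module

variable [AddCommMonoid E] [Module ℝ E]

/-- The cosine polynomial with coefficients `x i` at the frequencies `m i`. Together with `sinSum`
it plays the role of `∑ i, exp (I * m i * t) • x i`, which makes no sense over the reals. -/
noncomputable def cosSum (m : ι → ℤ) (x : ι → E) (t : ℝ) : E :=
  ∑ i, cos (m i * t) • x i

/-- The sine polynomial with coefficients `x i` at the frequencies `m i`; see `cosSum`. -/
noncomputable def sinSum (m : ι → ℤ) (x : ι → E) (t : ℝ) : E :=
  ∑ i, sin (m i * t) • x i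

variable [TopologicalSpace E] [ContinuousAdd E] [ContinuousSMul ℝ E]

@[fun_prop]
lemma continuous_cosSum (m : ι → ℤ) (x : ι → E) : Continuous (cosSum m x) := by
  unfold cosSum
  fun_prop

@[fun_prop]
lemma continuous_sinSum (m : ι → ℤ) (x : ι → E) : Continuous (sinSum m x) := by
  unfold sinSum
  fun_prop

end Module

variable [NormedAddCommGroup E] [InnerProductSpace ℝ E]

lemma inner_cosSum_cosSum_add_inner_sinSum_sinSum (m : ι → ℤ) (k : κ → ℤ) (x : ι → E) (y : κ → E)
    (t : ℝ) :
    ⟪cosSum m x t, cosSum k y t⟫_ℝ + ⟪sinSum m x t, sinSum k y t⟫_ℝ =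
      ∑ i, ∑ j, ⟪x i, y j⟫_ℝ * cos ((m i - k j : ℤ) * t) := by
  simp only [cosSum, sinSum, sum_inner]
  simp only [inner_sum, real_inner_smul_left, real_inner_smul_right, ← Finset.sum_add_distrib]
  refine Finset.sum_congr rfl fun i _ ↦ Finset.sum_congr rfl fun j _ ↦ ?_
  rw [Int.cast_sub, sub_mul, cos_sub]
  ring

lemma inner_sinSum_cosSum_sub_inner_cosSum_sinSum (m : ι → ℤ) (k : κ → ℤ) (x : ι → E) (y : κ → E)
    (t : ℝ) :
    ⟪sinSum m x t, cosSum k y t⟫_ℝ - ⟪cosSum m x t, sinSum k y t⟫_ℝ =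
      ∑ i, ∑ j, ⟪x i, y j⟫_ℝ * sin ((m i - k j : ℤ) * t) := by
  simp only [cosSum, sinSum, sum_inner]
  simp only [inner_sum, real_inner_smul_left, real_inner_smul_right, ← Finset.sum_sub_distrib]
  refine Finset.sum_congr rfl fun i _ ↦ Finset.sum_congr rfl fun j _ ↦ ?_
  rw [Int.cast_sub, sub_mul, sin_sub]
  ring

lemma integral_norm_cosSum_sq_add_norm_sinSum_sq {m : ι → ℤ} (hm : m.Injective) (x : ι → E) :
    ∫ t in (0 : ℝ)..2 * π, (‖cosSum m x t‖ ^ 2 + ‖sinSum m x t‖ ^ 2) =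
      2 * π * ∑ i, ‖x i‖ ^ 2 := by
  simp only [← real_inner_self_eq_norm_sq, inner_cosSum_cosSum_add_inner_sinSum_sinSum]
  rw [integral_sum_sum_mul _ fun i j ↦ Continuous.intervalIntegrable (by fun_prop) _ _,
    Finset.mul_sum]
  refine Finset.sum_congr rfl fun i _ ↦ ?_
  rw [Finset.sum_eq_single i]
  · simp only [sub_self, Int.cast_zero, zero_mul, cos_zero, intervalIntegral.integral_const,
      smul_eq_mul, mul_one, sub_zero]
    ring
  · intro j _ hji
    rw [integral_cos_int_mul (sub_ne_zero.mpr (hm.ne hji.symm)), mul_zero]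
  · simp

lemma integral_pi_sub_mul_inner_sub_inner (m : ι → ℤ) (k : κ → ℤ) (x : ι → E) (y : κ → E) :
    ∫ t in (0 : ℝ)..2 * π,
        (π - t) * (⟪sinSum m x t, cosSum k y t⟫_ℝ - ⟪cosSum m x t, sinSum k y t⟫_ℝ) =
      2 * π * ∑ i, ∑ j, ⟪x i, y j⟫_ℝ / (m i - k j) := by
  simp only [inner_sinSum_cosSum_sub_inner_cosSum_sinSum, Finset.mul_sum, mul_left_comm (π - _)]
  rw [integral_sum_sum_mul _ fun i j ↦ Continuous.intervalIntegrable (by fun_prop) _ _]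
  refine Finset.sum_congr rfl fun i _ ↦ Finset.sum_congr rfl fun j _ ↦ ?_
  rw [integral_pi_sub_mul_sin_int_mul, Int.cast_sub]
  ring

end TrigPolynomial

section HilbertInequality

variable {E ι κ : Type*} [NormedAddCommGroup E] [InnerProductSpace ℝ E] [Fintype ι] [Fintype κ]

lemma two_mul_mul_inner_sub_inner_le {r s : ℝ} (hrs : r ^ 2 ≤ s ^ 2) (u v u' v' : E) :
    2 * (r * (⟪u, v'⟫_ℝ - ⟪v, u'⟫_ℝ)) ≤
      s ^ 2 * (‖v‖ ^ 2 + ‖u‖ ^ 2) + (‖v'‖ ^ 2 + ‖u'‖ ^ 2) := by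
  have norm_sub_sq := norm_sub_sq_real (r • u) v'
  have norm_add_sq := norm_add_sq_real (r • v) u'
  simp only [real_inner_smul_left, norm_smul, mul_pow, norm_eq_abs, sq_abs]
    at norm_sub_sq norm_add_sq
  have scale_le := mul_le_mul_of_nonneg_right hrs (add_nonneg (sq_nonneg ‖v‖) (sq_nonneg ‖u‖))
  linarith [sq_nonneg ‖r • u - v'‖, sq_nonneg ‖r • v + u'‖]

lemma two_mul_sum_inner_div_sub_le {m : ι → ℤ} {k : κ → ℤ} (hm : m.Injective) (hk : k.Injective)
    (x : ι → E) (y : κ → E) :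
    2 * ∑ i, ∑ j, ⟪x i, y j⟫_ℝ / (m i - k j) ≤ π ^ 2 * ∑ i, ‖x i‖ ^ 2 + ∑ j, ‖y j‖ ^ 2 := by
  have integral_le :
      ∫ t in (0 : ℝ)..2 * π,
          2 * ((π - t) * (⟪sinSum m x t, cosSum k y t⟫_ℝ - ⟪cosSum m x t, sinSum k y t⟫_ℝ)) ≤
        ∫ t in (0 : ℝ)..2 * π, (π ^ 2 * (‖cosSum m x t‖ ^ 2 + ‖sinSum m x t‖ ^ 2) +
          (‖cosSum k y t‖ ^ 2 + ‖sinSum k y t‖ ^ 2)) := by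
    refine intervalIntegral.integral_mono_on two_pi_pos.le
      (Continuous.intervalIntegrable (by fun_prop) _ _)
      (Continuous.intervalIntegrable (by fun_prop) _ _) fun t ht ↦ ?_
    have sawtooth_sq_le : (π - t) ^ 2 ≤ π ^ 2 :=
      sq_le_sq' (by linarith [ht.2]) (by linarith [ht.1])
    exact two_mul_mul_inner_sub_inner_le sawtooth_sq_le _ _ _ _
  rw [intervalIntegral.integral_const_mul, integral_pi_sub_mul_inner_sub_inner,
    intervalIntegral.integral_add (Continuous.intervalIntegrable (by fun_prop) _ _)
      (Continuous.intervalIntegrable (by fun_prop) _ _), intervalIntegral.integral_const_mul,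
    integral_norm_cosSum_sq_add_norm_sinSum_sq hm,
    integral_norm_cosSum_sq_add_norm_sinSum_sq hk] at integral_le
  refine le_of_mul_le_mul_left ?_ two_pi_pos
  linarith

-- Hilbert's inequality; the terms with `m i = k j` are absent from the sum, as `x / 0 = 0`.
theorem sq_sum_inner_div_sub_le {m : ι → ℤ} {k : κ → ℤ} (hm : m.Injective) (hk : k.Injective)
    (x : ι → E) (y : κ → E) :
    (∑ i, ∑ j, ⟪x i, y j⟫_ℝ / (m i - k j)) ^ 2 ≤
      π ^ 2 * (∑ i, ‖x i‖ ^ 2) * ∑ j, ‖y j‖ ^ 2 := by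
  set T := ∑ i, ∑ j, ⟪x i, y j⟫_ℝ / (m i - k j) with hT
  -- The additive form for `r • x` and `y` is a nonnegative quadratic polynomial in `r`.
  have quadratic_nonneg (r : ℝ) :
      0 ≤ (π ^ 2 * ∑ i, ‖x i‖ ^ 2) * (r * r) + (-2 * T) * r + ∑ j, ‖y j‖ ^ 2 := by
    have scaled := two_mul_sum_inner_div_sub_le hm hk (r • x) y
    simp only [Pi.smul_apply, real_inner_smul_left, norm_smul, mul_pow, norm_eq_abs, sq_abs,
      mul_div_assoc, ← Finset.mul_sum, ← hT] at scaled
    linarith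
  have discrim_nonpos := discrim_le_zero quadratic_nonneg
  rw [discrim] at discrim_nonpos
  linarith

end HilbertInequality

section HarmonicSums

lemma mul_log_add_one_sub_log_le_one {x : ℝ} (hx : 0 < x) : x * (log (x + 1) - log x) ≤ 1 := by
  rw [← log_div (by positivity) hx.ne']
  calc x * log ((x + 1) / x) ≤ x * ((x + 1) / x - 1) := by
        gcongr
        exact log_le_sub_one_of_pos (by positivity)
    _ = 1 := by field_simp; ring

lemma one_le_harmonic {n : ℕ} (hn : n ≠ 0) : 1 ≤ harmonic n := by
  simpa [harmonic] using Finset.single_le_sum (f := fun i : ℕ ↦ ((i + 1 : ℕ) : ℚ)⁻¹)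
    (fun i _ ↦ by positivity) (Finset.mem_range.mpr (Nat.pos_of_ne_zero hn))

lemma mul_log_div_two_le_sum_harmonic (n : ℕ) :
    n * log n / 2 ≤ ∑ i ∈ Finset.range n, (harmonic i : ℝ) := by
  induction n with
  | zero => simp
  | succ n ih =>
    rcases eq_or_ne n 0 with rfl | hn
    · simp
    have log_step := mul_log_add_one_sub_log_le_one (x := n) (by positivity)
    have log_le : log (n + 1) ≤ harmonic n := mod_cast log_add_one_le_harmonic n
    have one_le : (1 : ℝ) ≤ harmonic n := mod_cast one_le_harmonic hn
    rw [Finset.sum_range_succ, Nat.cast_add_one]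
    linarith

lemma sum_range_inv_sub_eq_harmonic (n : ℕ) :
    ∑ j ∈ Finset.range n, ((n : ℝ) - j)⁻¹ = harmonic n := by
  rw [← Finset.sum_range_reflect, harmonic, Rat.cast_sum]
  refine Finset.sum_congr rfl fun j hj ↦ ?_
  have hj' : j + 1 ≤ n := Finset.mem_range.mp hj
  rw [Nat.sub_sub, add_comm 1, Nat.cast_sub hj']
  push_cast
  ring_nf

lemma sum_ite_le_div_sub_eq_harmonic {n : ℕ} (i : Fin n) :
    ∑ j : Fin n, (if j ≤ i then (1 : ℝ) else 0) / ((i : ℕ) - (j : ℕ)) = harmonic i := by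
  have range_filter : {j ∈ Finset.range n | j ≤ (i : ℕ)} = Finset.range (i + 1) := by
    ext j
    simp only [Finset.mem_filter, Finset.mem_range]
    omega
  simp only [Fin.le_def, ite_div, zero_div, one_div]
  rw [Fin.sum_univ_eq_sum_range (fun j ↦ if j ≤ (i : ℕ) then ((i : ℝ) - j)⁻¹ else 0),
    ← Finset.sum_filter, range_filter, Finset.sum_range_succ, sub_self, _root_.inv_zero, add_zero,
    sum_range_inv_sub_eq_harmonic]

end HarmonicSums

section PrefixSum

variable {E : Type*} [NormedAddCommGroup E] [InnerProductSpace ℝ E] {n : ℕ}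

lemma sq_mul_log_div_le_sum_norm_sq_mul_sum_norm_sq {a b : Fin n → E}
    (hab : ∀ i j, ⟪a i, b j⟫_ℝ = if j ≤ i then 1 else 0) :
    (n * log n) ^ 2 / (4 * π ^ 2) ≤ (∑ i, ‖a i‖ ^ 2) * ∑ j, ‖b j‖ ^ 2 := by
  have frequency_injective : Function.Injective fun i : Fin n ↦ ((i : ℕ) : ℤ) :=
    Nat.cast_injective.comp Fin.val_injective
  have hilbert := sq_sum_inner_div_sub_le frequency_injective frequency_injective a b
  simp only [hab, Int.cast_natCast, sum_ite_le_div_sub_eq_harmonic,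
    Fin.sum_univ_eq_sum_range fun i ↦ (harmonic i : ℝ)] at hilbert
  have mul_log_nonneg : 0 ≤ n * log n / 2 :=
    div_nonneg (mul_nonneg n.cast_nonneg (log_natCast_nonneg n)) zero_le_two
  have sq_le_sq := pow_le_pow_left₀ mul_log_nonneg (mul_log_div_two_le_sum_harmonic n) 2
  rw [div_le_iff₀ (by positivity)]
  linarith

theorem prefix_sum_factorization_lower_bound_general (hn : 1 ≤ n) {a b : Fin n → E}
    (hab : ∀ i j, ⟪a i, b j⟫_ℝ = if j ≤ i then 1 else 0) :
    n * log n ^ 2 / (4 * π ^ 2) ≤ (⨆ j, ‖b j‖ ^ 2) * ∑ i, ‖a i‖ ^ 2 := by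
  have hn' : (0 : ℝ) < n := Nat.cast_pos.mpr hn
  have sum_le_mul_iSup : ∑ j, ‖b j‖ ^ 2 ≤ n * ⨆ j, ‖b j‖ ^ 2 := by
    simpa using Finset.sum_le_card_nsmul Finset.univ (fun j ↦ ‖b j‖ ^ 2) _
      fun j _ ↦ le_ciSup (Set.finite_range fun j ↦ ‖b j‖ ^ 2).bddAbove j
  refine le_of_mul_le_mul_left ?_ hn'
  calc n * (n * log n ^ 2 / (4 * π ^ 2)) = (n * log n) ^ 2 / (4 * π ^ 2) := by ring
    _ ≤ (∑ i, ‖a i‖ ^ 2) * ∑ j, ‖b j‖ ^ 2 := sq_mul_log_div_le_sum_norm_sq_mul_sum_norm_sq hab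
    _ ≤ (∑ i, ‖a i‖ ^ 2) * (n * ⨆ j, ‖b j‖ ^ 2) := by gcongr
    _ = n * ((⨆ j, ‖b j‖ ^ 2) * ∑ i, ‖a i‖ ^ 2) := by ring

end PrefixSum

/-- The lower bound (Propositions `all_linop_lb` and
`prefix_sum_singular_values` combined): any factorization `A·B = S` of the
prefix-sum matrix satisfies
`(max_i ‖B_{:,i}‖₂²)·‖A‖_F² ≥ n (log n)² / (4π²)`. -/
theorem prefix_sum_factorization_lower_bound (n : ℕ) (hn : 1 ≤ n)
    (S : Matrix (Fin n) (Fin n) ℝ)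
    (hSdef : ∀ i j : Fin n, S i j = if j ≤ i then 1 else 0) :
    ∀ A B : Matrix (Fin n) (Fin n) ℝ, A * B = S →
      (n : ℝ) * (Real.log n) ^ 2 / (4 * Real.pi ^ 2) ≤
        (⨆ i : Fin n, ∑ j, (B j i) ^ 2) * (∑ i, ∑ j, (A i j) ^ 2) := by
  intro A B hAB
  have hab (i j : Fin n) :
      ⟪WithLp.toLp 2 (A i), WithLp.toLp 2 (Bᵀ j)⟫_ℝ = if j ≤ i then 1 else 0 := by
    simp [← hSdef, ← hAB, Matrix.mul_apply, PiLp.inner_apply, mul_comm]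
  simpa [EuclideanSpace.real_norm_sq_eq] using
    prefix_sum_factorization_lower_bound_general hn hab
end
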